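/- arXiv:1603.07580 — 3 statements merged into one kernel-verified Lean document; each statement's English description precedes it below -/
import Mathlib

section
/- Let ν be a Borel measure on ℝ^d, let 0 < α ≤ 1, r_0 > 1, 0 < ε ≤ 1 − r_0^{−α}, and let x ∈ ℝ^d with |x| ≥ r_0. Assume ν(B^c(0,1)) < ∞ and that y ↦ |y| is ν-integrable on the set A := {y : |y| ≥ 1 and r_0 < |y+x| < |x|}. Then ∫_{B^c(0,1)} [ (1 − |y+x|^{−α}) 1_{{|y+x| > r_0}}(y) + (1 − r_0^{−α} − ε) 1_{{|y+x| ≤ r_0}}(y) − (1 − |x|^{−α}) ] ν(dy) ≥ −(α/(r_0 |x|^α)) ∫_A |y| ν(dy) + (−1 + |x|^{−α}) · ν({y : |y| ≥ 1 and |y+x| ≤ r_0}). -/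
open MeasureTheory Real

/-!
Split the set `S` of jumps according to where `y + x` lands. If `r₀ < ‖y + x‖ < ‖x‖`, Bernoulli's
inequality for exponents in `[0, 1]` bounds the loss `‖y + x‖ ^ (-α) - ‖x‖ ^ (-α)` by
`α / (r₀ * ‖x‖ ^ α) * (‖x‖ - ‖y + x‖)`, and `‖x‖ - ‖y + x‖ ≤ ‖y‖`. If `‖y + x‖ ≤ r₀`, the function
is nonnegative at `y + x`, so the loss is at most `1 - ‖x‖ ^ (-α)`. The remaining jumps do not
decrease `r ↦ 1 - r ^ (-α)`, so nothing is lost.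
-/

lemma rpow_neg_sub_rpow_neg_le {α s t : ℝ} (hα : 0 ≤ α) (hα1 : α ≤ 1) (hs : 0 < s) (ht : 0 < t) :
    s ^ (-α) - t ^ (-α) ≤ α / (s * t ^ α) * (t - s) := by
  have bernoulli : t ^ α / s ^ α ≤ 1 + α * (t / s - 1) := by
    have h : -1 ≤ t / s - 1 := by linarith [div_pos ht hs]
    simpa [div_rpow ht.le hs.le] using rpow_one_add_le_one_add_mul_self h hα hα1
  calc s ^ (-α) - t ^ (-α) = (t ^ α / s ^ α - 1) / t ^ α := by
        rw [rpow_neg hs.le, rpow_neg ht.le]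
        field_simp
    _ ≤ α * (t / s - 1) / t ^ α := by gcongr; linarith
    _ = α / (s * t ^ α) * (t - s) := by field_simp

lemma setIntegral_add_setIntegral_le_setIntegral {X : Type*} [MeasurableSpace X] {μ : Measure X}
    {f : X → ℝ} {S A B : Set X} (hS : MeasurableSet S) (hA : MeasurableSet A)
    (hB : MeasurableSet B) (hAS : A ⊆ S) (hBS : B ⊆ S) (hAB : Disjoint A B)
    (hf : IntegrableOn f S μ) (hf0 : ∀ y ∈ S \ (A ∪ B), 0 ≤ f y) :
    ∫ y in A, f y ∂μ + ∫ y in B, f y ∂μ ≤ ∫ y in S, f y ∂μ := by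
  have hrest : 0 ≤ ∫ y in S \ (A ∪ B), f y ∂μ :=
    setIntegral_nonneg (hS.diff (hA.union hB)) hf0
  rw [setIntegral_sdiff (hA.union hB) hf (Set.union_subset hAS hBS),
    setIntegral_union hAB hB (hf.mono_set hAS) (hf.mono_set hBS)] at hrest
  linarith

/-- The radial profile of the Lyapunov function: `W_α(r) = 1 - r ^ (-α)` for `r > r₀`, continued by
the constant `v` (which is `W_α(r₀) - ε` in the application) to all `r ≤ r₀`. -/
noncomputable def lyapunovProfile (α r₀ v r : ℝ) : ℝ :=
  if r₀ < r then 1 - r ^ (-α) else v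

namespace lyapunovProfile

section Profile

variable {α r₀ v r t : ℝ}

lemma of_lt (h : r₀ < r) : lyapunovProfile α r₀ v r = 1 - r ^ (-α) := if_pos h

lemma of_le (h : r ≤ r₀) : lyapunovProfile α r₀ v r = v := if_neg h.not_gt

lemma measurable : Measurable (lyapunovProfile α r₀ v) :=
  Measurable.ite measurableSet_Ioi (by fun_prop) measurable_const

lemma abs_le_one_add_rpow_neg_add_abs (hα : 0 ≤ α) (hr₀ : 0 < r₀) :
    |lyapunovProfile α r₀ v r| ≤ 1 + r₀ ^ (-α) + |v| := by
  have hr₀α : 0 < r₀ ^ (-α) := rpow_pos_of_pos hr₀ _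
  rcases lt_or_ge r₀ r with h | h
  · have hr : 0 ≤ r ^ (-α) := rpow_nonneg (hr₀.trans h).le _
    have hrr₀ : r ^ (-α) ≤ r₀ ^ (-α) := rpow_le_rpow_of_nonpos hr₀ h.le (neg_nonpos.2 hα)
    rw [of_lt h, abs_le]
    constructor <;> linarith [abs_nonneg v]
  · rw [of_le h]
    linarith

lemma one_sub_rpow_neg_le (hα : 0 ≤ α) (ht : 0 < t) (hr : r₀ < r) (htr : t ≤ r) :
    1 - t ^ (-α) ≤ lyapunovProfile α r₀ v r := by
  rw [of_lt hr]
  exact sub_le_sub_left (rpow_le_rpow_of_nonpos ht htr (neg_nonpos.2 hα)) 1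

lemma one_sub_rpow_neg_sub_le (hα : 0 ≤ α) (hα1 : α ≤ 1) (hr₀ : 0 < r₀) (hr : r₀ < r)
    (hrt : r ≤ t) :
    1 - t ^ (-α) - α / (r₀ * t ^ α) * (t - r) ≤ lyapunovProfile α r₀ v r := by
  have hr_pos : 0 < r := hr₀.trans hr
  have ht_pos : 0 < t := hr_pos.trans_le hrt
  have h : r ^ (-α) - t ^ (-α) ≤ α / (r₀ * t ^ α) * (t - r) :=
    (rpow_neg_sub_rpow_neg_le hα hα1 hr_pos ht_pos).trans <| by
      have := sub_nonneg.2 hrt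
      gcongr
  rw [of_lt hr]
  linarith

end Profile

variable {E : Type*} [SeminormedAddCommGroup E] {α r₀ v : ℝ} {x : E}

lemma indicator_add_indicator (y : E) :
    {y : E | r₀ < ‖y + x‖}.indicator (fun y => 1 - ‖y + x‖ ^ (-α)) y
      + {y : E | ‖y + x‖ ≤ r₀}.indicator (fun _ => v) y = lyapunovProfile α r₀ v ‖y + x‖ := by
  rcases lt_or_ge r₀ ‖y + x‖ with h | h
  · simp [of_lt h, h, h.not_ge]
  · simp [of_le h, h, h.not_gt]

variable [MeasurableSpace E] {ν : Measure E} {S : Set E}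

lemma neg_one_add_mul_measureReal_le (hv : 0 ≤ v) (hS : MeasurableSet S)
    (hSx : ∀ y ∈ S, ‖y + x‖ ≤ r₀) :
    (-1 + ‖x‖ ^ (-α)) * ν.real S
      ≤ ∫ y in S, (lyapunovProfile α r₀ v ‖y + x‖ - (1 - ‖x‖ ^ (-α))) ∂ν := by
  rw [setIntegral_congr_fun hS fun y hy => by rw [of_le (hSx y hy)], setIntegral_const,
    smul_eq_mul, mul_comm (ν.real S)]
  gcongr
  linarith

variable [OpensMeasurableSpace E]

lemma integrableOn (hα : 0 ≤ α) (hr₀ : 0 < r₀) (hS : ν S ≠ ⊤) :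
    IntegrableOn (fun y => lyapunovProfile α r₀ v ‖y + x‖) S ν :=
  Measure.integrableOn_of_bounded hS
    (measurable.comp (continuous_add_const x).norm.measurable).aestronglyMeasurable
    (.of_forall fun _ => abs_le_one_add_rpow_neg_add_abs hα hr₀)

lemma neg_mul_setIntegral_norm_le (hα : 0 ≤ α) (hα1 : α ≤ 1) (hr₀ : 0 < r₀)
    (hS : MeasurableSet S) (hνS : ν S ≠ ⊤) (hSx : ∀ y ∈ S, r₀ < ‖y + x‖ ∧ ‖y + x‖ ≤ ‖x‖) :
    -(α / (r₀ * ‖x‖ ^ α)) * ∫ y in S, ‖y‖ ∂ν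
      ≤ ∫ y in S, (lyapunovProfile α r₀ v ‖y + x‖ - (1 - ‖x‖ ^ (-α))) ∂ν := by
  have hnorm : IntegrableOn (fun y => ‖y‖) S ν := by
    refine Measure.integrableOn_of_bounded (M := 2 * ‖x‖) hνS
      continuous_norm.measurable.aestronglyMeasurable (ae_restrict_of_forall_mem hS fun y hy => ?_)
    have := norm_le_add_norm_add y x
    rw [norm_norm]
    linarith [(hSx y hy).2]
  rw [← integral_const_mul]
  refine setIntegral_mono_on (hnorm.const_mul _)
    ((integrableOn hα hr₀ hνS).sub (integrableOn_const hνS)) hS fun y hy => ?_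
  have hjump : ‖x‖ - ‖y + x‖ ≤ ‖y‖ := by
    simpa using norm_sub_norm_le x (y + x)
  have hloss := one_sub_rpow_neg_sub_le (v := v) hα hα1 hr₀ (hSx y hy).1 (hSx y hy).2
  have hmono : α / (r₀ * ‖x‖ ^ α) * (‖x‖ - ‖y + x‖) ≤ α / (r₀ * ‖x‖ ^ α) * ‖y‖ := by gcongr
  linarith

end lyapunovProfile

theorem stmt_3_general {E : Type*} [SeminormedAddCommGroup E] [MeasurableSpace E]
    [OpensMeasurableSpace E] {ν : Measure E} {S : Set E} {α r₀ v : ℝ} {x : E} (hα : 0 ≤ α)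
    (hα1 : α ≤ 1) (hr₀ : 0 < r₀) (hv : 0 ≤ v) (hx : 0 < ‖x‖) (hS : MeasurableSet S)
    (hνS : ν S ≠ ⊤) :
    -(α / (r₀ * ‖x‖ ^ α)) * (∫ y in {y | y ∈ S ∧ r₀ < ‖y + x‖ ∧ ‖y + x‖ < ‖x‖}, ‖y‖ ∂ν)
      + (-1 + ‖x‖ ^ (-α)) * ν.real {y | y ∈ S ∧ ‖y + x‖ ≤ r₀}
    ≤ ∫ y in S,
        ({y : E | r₀ < ‖y + x‖}.indicator (fun y => 1 - ‖y + x‖ ^ (-α)) y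
          + {y : E | ‖y + x‖ ≤ r₀}.indicator (fun _ => v) y
          - (1 - ‖x‖ ^ (-α))) ∂ν := by
  simp only [lyapunovProfile.indicator_add_indicator]
  set A := {y | y ∈ S ∧ r₀ < ‖y + x‖ ∧ ‖y + x‖ < ‖x‖}
  set B := {y | y ∈ S ∧ ‖y + x‖ ≤ r₀}
  have hnorm : Measurable fun y : E => ‖y + x‖ := (continuous_add_const x).norm.measurable
  have hA : MeasurableSet A := hS.inter (hnorm measurableSet_Ioo)
  have hB : MeasurableSet B := hS.inter (hnorm measurableSet_Iic)
  have hAS : A ⊆ S := fun _ hy => hy.1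
  have hBS : B ⊆ S := fun _ hy => hy.1
  have hAB : Disjoint A B := Set.disjoint_left.2 fun _ hyA hyB => hyB.2.not_gt hyA.2.1
  refine (add_le_add
    (lyapunovProfile.neg_mul_setIntegral_norm_le hα hα1 hr₀ hA (measure_ne_top_of_subset hAS hνS)
      fun _ hy => ⟨hy.2.1, hy.2.2.le⟩)
    (lyapunovProfile.neg_one_add_mul_measureReal_le hv hB fun _ hy => hy.2)).trans
    (setIntegral_add_setIntegral_le_setIntegral hS hA hB hAS hBS hAB
      ((lyapunovProfile.integrableOn hα hr₀ hνS).sub (integrableOn_const hνS)) ?_)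
  rintro y ⟨hyS, hyAB⟩
  have hlt : r₀ < ‖y + x‖ := not_le.1 fun h => hyAB (.inr ⟨hyS, h⟩)
  have hle : ‖x‖ ≤ ‖y + x‖ := not_lt.1 fun h => hyAB (.inl ⟨hyS, hlt, h⟩)
  exact sub_nonneg.2 (lyapunovProfile.one_sub_rpow_neg_le hα hx hlt hle)

theorem stmt_3 (d : ℕ) (ν : Measure (EuclideanSpace ℝ (Fin d)))
    (α r0 ε : ℝ) (hα : 0 < α) (hα1 : α ≤ 1) (hr0 : 1 < r0)
    (hε : 0 < ε) (hε1 : ε ≤ 1 - r0 ^ (-α))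
    (x : EuclideanSpace ℝ (Fin d)) (hx : r0 ≤ ‖x‖)
    (hfin : ν ((Metric.ball (0 : EuclideanSpace ℝ (Fin d)) 1)ᶜ) < ⊤)
    (hA : IntegrableOn (fun y => ‖y‖)
      {y : EuclideanSpace ℝ (Fin d) | 1 ≤ ‖y‖ ∧ r0 < ‖y + x‖ ∧ ‖y + x‖ < ‖x‖} ν) :
    -(α / (r0 * ‖x‖ ^ α)) *
        (∫ y in {y : EuclideanSpace ℝ (Fin d) | 1 ≤ ‖y‖ ∧ r0 < ‖y + x‖ ∧ ‖y + x‖ < ‖x‖},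
            ‖y‖ ∂ν)
      + (-1 + ‖x‖ ^ (-α)) *
          (ν {y : EuclideanSpace ℝ (Fin d) | 1 ≤ ‖y‖ ∧ ‖y + x‖ ≤ r0}).toReal
    ≤ ∫ y in (Metric.ball (0 : EuclideanSpace ℝ (Fin d)) 1)ᶜ,
        (Set.indicator {y : EuclideanSpace ℝ (Fin d) | r0 < ‖y + x‖}
            (fun y => 1 - ‖y + x‖ ^ (-α)) y
          + Set.indicator {y : EuclideanSpace ℝ (Fin d) | ‖y + x‖ ≤ r0}
              (fun _ => 1 - r0 ^ (-α) - ε) y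
          - (1 - ‖x‖ ^ (-α))) ∂ν := by
  have hball : (Metric.ball (0 : EuclideanSpace ℝ (Fin d)) 1)ᶜ = {y | 1 ≤ ‖y‖} := by ext; simp
  rw [hball] at hfin ⊢
  exact stmt_3_general hα.le hα1 (by linarith) (by linarith) (by linarith)
    (measurableSet_le measurable_const measurable_norm) hfin.ne
end

section
/- Let (E, 𝓔) be a measurable space, let π be a finite measure on E, and for each t > 0 let P_t be a Markov (probability) kernel from E to E such that for every B ∈ 𝓔 the map (t, x) ↦ P_t(x, B) is jointly measurable on (0,∞) × E. Assume π is invariant, i.e. for every t > 0 and every B ∈ 𝓔, ∫_E P_t(x, B) π(dx) = π(B). Assume further that there exist measurable sets B_j ∈ 𝓔, j ∈ ℕ, with ⋃_{j∈ℕ} B_j = E, and finite constants M_j ≥ 0 such that ∫_0^∞ P_t(x, B_j) dt ≤ M_j for all x ∈ E and all j ∈ ℕ. Then π is the zero measure. In particular, a transient Markov process cannot possess a nonzero finite invariant measure. -/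
open MeasureTheory

/-!
If `π` is invariant, integrating `π P_t = π` over all times gives `π U = ∞ • π`, where
`U = ∫ P_t dt` is the potential kernel. A set `B` for which `∫ U(x, B) π(dx)` is finite is therefore
`π`-null. When `π` is finite, transience covers the state space by countably many such sets.
-/

section PotentialKernel

open ProbabilityTheory Measure Set
open scoped ENNReal

variable {T E F : Type*} [MeasurableSpace T] [MeasurableSpace E] [MeasurableSpace F]

theorem sigmaFinite_comap_of_measurableEmbedding {f : E → F} (hf : MeasurableEmbedding f)
    (μ : Measure F) [SigmaFinite μ] : SigmaFinite (μ.comap f) := by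
  refine .of_map _ hf.measurable.aemeasurable ?_
  rw [hf.map_comap]
  infer_instance

/-- The potential kernel `U(x, ·) = ∫ κ_t(x, ·) τ(dt)` of a family `(κ_t)` of kernels, with
respect to a measure `τ` on the set `T` of times. Encoding the family as a single kernel from
`T × E` amounts to joint measurability in time and space. -/
noncomputable def potentialKernel (τ : Measure T) [SFinite τ] (κ : Kernel (T × E) F) :
    Kernel E F :=
  κ ∘ₖ (Kernel.const E τ ×ₖ Kernel.id)

variable {τ : Measure T} [SFinite τ]

theorem potentialKernel_apply (κ : Kernel (T × E) F) (x : E) {B : Set F} (hB : MeasurableSet B) :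
    potentialKernel τ κ x B = ∫⁻ t, κ (t, x) B ∂τ := by
  rw [potentialKernel, Kernel.comp_apply' _ _ _ hB, Kernel.prod_apply, Kernel.const_apply,
    Kernel.id_apply, prod_dirac, lintegral_map (κ.measurable_coe hB) measurable_prodMk_right]

theorem invariant_iff_lintegral_eq {κ : Kernel E E} {π : Measure E} :
    κ.Invariant π ↔ ∀ B, MeasurableSet B → ∫⁻ x, κ x B ∂π = π B := by
  rw [Kernel.Invariant, Measure.ext_iff]
  exact forall₂_congr fun B hB ↦ by rw [bind_apply hB κ.aemeasurable]

variable {κ : Kernel (T × E) E} {π : Measure E} [SFinite π]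

theorem bind_potentialKernel_of_invariant (hinv : ∀ᵐ t ∂τ, (κ.sectR t).Invariant π) :
    π.bind (potentialKernel τ κ) = τ univ • π := by
  ext B hB
  calc π.bind (potentialKernel τ κ) B
      = ∫⁻ x, ∫⁻ t, κ (t, x) B ∂τ ∂π := by
        simp_rw [bind_apply hB (Kernel.aemeasurable _), potentialKernel_apply κ _ hB]
    _ = ∫⁻ t, ∫⁻ x, κ (t, x) B ∂π ∂τ :=
        (lintegral_lintegral_swap (κ.measurable_coe hB).aemeasurable).symm
    _ = ∫⁻ _, π B ∂τ :=
        lintegral_congr_ae <| hinv.mono fun _ ht ↦ invariant_iff_lintegral_eq.1 ht B hB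
    _ = (τ univ • π) B := by
        rw [lintegral_const, Measure.smul_apply, smul_eq_mul, mul_comm]

theorem measure_eq_zero_of_lintegral_potentialKernel_ne_top (hτ : τ univ = ∞)
    (hinv : ∀ᵐ t ∂τ, (κ.sectR t).Invariant π) {B : Set E} (hB : MeasurableSet B)
    (hfin : ∫⁻ x, potentialKernel τ κ x B ∂π ≠ ∞) : π B = 0 := by
  by_contra hpos
  apply hfin
  rw [← bind_apply hB (Kernel.aemeasurable _), bind_potentialKernel_of_invariant hinv,
    Measure.smul_apply, hτ, smul_eq_mul, ENNReal.top_mul hpos]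

theorem eq_zero_of_forall_lintegral_potentialKernel_ne_top (hτ : τ univ = ∞)
    (hinv : ∀ᵐ t ∂τ, (κ.sectR t).Invariant π) {ι : Type*} [Countable ι] {B : ι → Set E}
    (hBmeas : ∀ j, MeasurableSet (B j)) (hcover : ⋃ j, B j = univ)
    (hfin : ∀ j, ∫⁻ x, potentialKernel τ κ x (B j) ∂π ≠ ∞) :
    π = 0 := by
  rw [← measure_univ_eq_zero, ← hcover, measure_iUnion_null_iff]
  exact fun j ↦ measure_eq_zero_of_lintegral_potentialKernel_ne_top hτ hinv (hBmeas j) (hfin j)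

theorem stmt_7_general {ν : Measure T} [SigmaFinite ν] {s : Set T} (hs : MeasurableSet s)
    (hνs : ν s = ∞) (P : T → E → Measure E)
    (hjm : ∀ B, MeasurableSet B → Measurable fun p : s × E ↦ P p.1 p.2 B)
    (hinv : ∀ t ∈ s, ∀ B, MeasurableSet B → ∫⁻ x, P t x B ∂π = π B)
    {ι : Type*} [Countable ι] {B : ι → Set E} (hBmeas : ∀ j, MeasurableSet (B j))
    (hcover : ⋃ j, B j = univ) (hfin : ∀ j, ∫⁻ x, ∫⁻ t in s, P t x (B j) ∂ν ∂π ≠ ∞) :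
    π = 0 := by
  let κ : Kernel (s × E) E := ⟨fun p ↦ P p.1 p.2, measurable_of_measurable_coe _ hjm⟩
  let τ : Measure s := ν.comap (↑)
  have : SigmaFinite τ := sigmaFinite_comap_of_measurableEmbedding (.subtype_coe hs) ν
  have hτ : τ univ = ∞ := by
    rw [comap_subtype_coe_apply hs, Subtype.coe_image_univ, hνs]
  have hκinv (t : s) : (κ.sectR t).Invariant π := invariant_iff_lintegral_eq.2 (hinv t t.2)
  have hpotential (j : ι) (x : E) : potentialKernel τ κ x (B j) = ∫⁻ t in s, P t x (B j) ∂ν :=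
    (potentialKernel_apply κ x (hBmeas j)).trans
      (lintegral_subtype_comap hs fun t ↦ P t x (B j))
  refine eq_zero_of_forall_lintegral_potentialKernel_ne_top hτ (ae_of_all _ hκinv) hBmeas hcover ?_
  simpa only [hpotential] using hfin

end PotentialKernel

theorem stmt_7 {E : Type*} [MeasurableSpace E] (π : Measure E) [IsFiniteMeasure π]
    (P : ℝ → ProbabilityTheory.Kernel E E)
    (hMarkov : ∀ t : ℝ, 0 < t → ProbabilityTheory.IsMarkovKernel (P t))
    (hjm : ∀ B : Set E, MeasurableSet B →
      Measurable (fun p : {t : ℝ // 0 < t} × E => P p.1.1 p.2 B))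
    (hinv : ∀ t : ℝ, 0 < t → ∀ B : Set E, MeasurableSet B →
      ∫⁻ x, P t x B ∂π = π B)
    (B : ℕ → Set E) (hBmeas : ∀ j, MeasurableSet (B j))
    (hcover : ⋃ j, B j = Set.univ)
    (M : ℕ → ℝ) (hM : ∀ j, 0 ≤ M j)
    (hbound : ∀ x j, ∫⁻ t in Set.Ioi (0 : ℝ), P t x (B j) ≤ ENNReal.ofReal (M j)) :
    π = 0 := by
  have hfin (j : ℕ) : ∫⁻ x, (∫⁻ t in Set.Ioi (0 : ℝ), P t x (B j)) ∂π ≠ ⊤ :=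
    (IsFiniteMeasure.lintegral_lt_top_of_bounded_to_ennreal π
      ⟨(M j).toNNReal, (hbound · j)⟩).ne
  exact stmt_7_general measurableSet_Ioi Real.volume_Ioi (P · ·) hjm hinv hBmeas hcover hfin
end

section
/- Let E be a topological space equipped with its Borel σ-algebra, and for each t > 0 let P_t be a sub-probability kernel from E to E (i.e. P_t(x, ·) is a measure with P_t(x, E) ≤ 1 and x ↦ P_t(x, B) is measurable for each Borel set B). Let g : E → [0, ∞] be lower semicontinuous and suppose that: (a) for every x ∈ E and every t > 0, ∫_E g(y) P_t(x, dy) ≤ g(x); (b) for every x ∈ E and every nonempty open set O ⊆ E there exists t > 0 with P_t(x, O) > 0. Then, if g(x_0) > 0 for some x_0 ∈ E, it follows that g(x) > 0 for every x ∈ E; equivalently, if g vanishes at some point of E, then g vanishes identically on E. -/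
open MeasureTheory
open scoped ENNReal

theorem isOpen_support_of_lowerSemicontinuous {α γ : Type*} [TopologicalSpace α]
    [AddZeroClass γ] [PartialOrder γ] [CanonicallyOrderedAdd γ] {f : α → γ}
    (hf : LowerSemicontinuous f) : IsOpen (Function.support f) := by
  have support_eq : Function.support f = f ⁻¹' Set.Ioi 0 := by
    ext x
    exact pos_iff_ne_zero.symm
  exact support_eq ▸ hf.isOpen_preimage 0

section

variable {E : Type*} [TopologicalSpace E] [MeasurableSpace E] [OpensMeasurableSpace E]
  {ι : Sort*} {g : E → ℝ≥0∞}

theorem exists_lintegral_pos_of_lowerSemicontinuous {μ : ι → Measure E}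
    (hμ : ∀ O : Set E, IsOpen O → O.Nonempty → ∃ i, 0 < μ i O)
    (hg : LowerSemicontinuous g) (hg₀ : ∃ x, 0 < g x) :
    ∃ i, 0 < ∫⁻ y, g y ∂(μ i) := by
  have support_nonempty : (Function.support g).Nonempty := hg₀.imp fun _ ↦ ne_of_gt
  obtain ⟨i, hi⟩ := hμ _ (isOpen_support_of_lowerSemicontinuous hg) support_nonempty
  exact ⟨i, (lintegral_pos_iff_support hg.measurable).2 hi⟩

theorem stmt_8_general (P : ι → E → Measure E) (hg : LowerSemicontinuous g)
    (ha : ∀ x i, ∫⁻ y, g y ∂(P i x) ≤ g x)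
    (hb : ∀ x, ∀ O : Set E, IsOpen O → O.Nonempty → ∃ i, 0 < P i x O) :
    (∃ x₀, 0 < g x₀) → ∀ x, 0 < g x := by
  intro hg₀ x
  obtain ⟨i, lintegral_pos⟩ := exists_lintegral_pos_of_lowerSemicontinuous (hb x) hg hg₀
  exact lintegral_pos.trans_le (ha x i)

end

theorem stmt_8 {E : Type*} [TopologicalSpace E] [MeasurableSpace E] [BorelSpace E]
    (P : ℝ → ProbabilityTheory.Kernel E E)
    (hsub : ∀ t : ℝ, 0 < t → ∀ x : E, P t x Set.univ ≤ 1)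
    (g : E → ℝ≥0∞) (hg : LowerSemicontinuous g)
    (ha : ∀ x : E, ∀ t : ℝ, 0 < t → ∫⁻ y, g y ∂(P t x) ≤ g x)
    (hb : ∀ x : E, ∀ O : Set E, IsOpen O → O.Nonempty → ∃ t : ℝ, 0 < t ∧ 0 < P t x O) :
    (∃ x₀, 0 < g x₀) → ∀ x, 0 < g x := by
  refine stmt_8_general (fun (t : Set.Ioi (0 : ℝ)) x ↦ P t x) hg (fun x t ↦ ha x t t.2) ?_
  simpa only [Subtype.exists, Set.mem_Ioi, exists_prop] using hb
end
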